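/- arXiv:1207.2008 — 2 statements merged into one kernel-verified Lean document; each statement's English description precedes it below -/
import Mathlib

section
/- For every real number x and every real t with |t| < π/2, the series 1 + Σ_{n≥1} A^{(1,0,∅,0)}_{2n}(x) · t^{2n}/(2n)! converges and its sum equals (sec t)^x = (cos t)^{−x}. -/
/-- A permutation `σ` of `{1,…,n}` (as a permutation of `Fin n`) is up-down if
`σ_1 < σ_2 > σ_3 < σ_4 > ⋯`. -/
def UpDown {n : ℕ} (σ : Equiv.Perm (Fin n)) : Prop :=
  ∀ i : Fin n, ∀ h : i.val + 1 < n,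
    if Even i.val then σ i < σ ⟨i.val + 1, h⟩ else σ ⟨i.val + 1, h⟩ < σ i

/-- A permutation is down-up if `σ_1 > σ_2 < σ_3 > σ_4 < ⋯`. -/
def DownUp {n : ℕ} (σ : Equiv.Perm (Fin n)) : Prop :=
  ∀ i : Fin n, ∀ h : i.val + 1 < n,
    if Even i.val then σ ⟨i.val + 1, h⟩ < σ i else σ i < σ ⟨i.val + 1, h⟩

/-- `σ_i` matches `MMP(1,0,∅,0)`: there exists `j > i` with `σ_j > σ_i` and
there is no `j < i` with `σ_j < σ_i`. -/
def Matches1 {n : ℕ} (σ : Equiv.Perm (Fin n)) (i : Fin n) : Prop :=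
  (∃ j, i < j ∧ σ i < σ j) ∧ ¬ ∃ j, j < i ∧ σ j < σ i

/-- `mmp^{(1,0,∅,0)}(σ)`: the number of indices matching `MMP(1,0,∅,0)` in `σ`. -/
noncomputable def mmp1 {n : ℕ} (σ : Equiv.Perm (Fin n)) : ℕ :=
  {i : Fin n | Matches1 σ i}.ncard

open scoped Classical in
/-- `A^{(1,0,∅,0)}_{2n}(x) = Σ_{σ ∈ UD_{2n}} x^{mmp^{(1,0,∅,0)}(σ)}`. -/
noncomputable def Apoly (n : ℕ) (x : ℝ) : ℝ :=
  ∑ σ : Equiv.Perm (Fin (2*n)), if UpDown σ then x ^ mmp1 σ else 0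


/-- alternation among the first `a` entries -/
def Alt {n : ℕ} (σ : Equiv.Perm (Fin n)) (a : ℕ) : Prop :=
  ∀ i j : Fin n, j.val = i.val + 1 → j.val < a → if Even i.val then σ i < σ j else σ j < σ i

/-- increasing from position `a` on -/
def Inc {n : ℕ} (σ : Equiv.Perm (Fin n)) (a : ℕ) : Prop :=
  ∀ i j : Fin n, a ≤ i.val → j.val = i.val + 1 → σ i < σ j

/-- number of left-to-right minima -/
def lrm {n : ℕ} (σ : Equiv.Perm (Fin n)) : ℕ :=
  (Finset.univ.filter fun i : Fin n => ∀ j, j < i → σ i < σ j).card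

lemma upDown_iff_alt {n : ℕ} (σ : Equiv.Perm (Fin n)) : UpDown σ ↔ Alt σ n := by
  constructor
  · intro h i j hj _
    have := h i (by omega)
    have e : j = ⟨i.val + 1, by omega⟩ := Fin.ext hj
    rw [e]; exact this
  · intro h i hi
    exact h i ⟨i.val + 1, hi⟩ rfl hi

lemma mmp1_eq_lrm {n : ℕ} (σ : Equiv.Perm (Fin (2 * n))) (h : UpDown σ) : mmp1 σ = lrm σ := by
  unfold mmp1 lrm
  rw [← Set.ncard_coe_finset]
  congr 1
  ext i
  simp only [Set.mem_ofPred_eq, Finset.coe_filter, Finset.mem_univ, true_and, Matches1]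
  have hiff : (¬ ∃ j, j < i ∧ σ j < σ i) ↔ ∀ j, j < i → σ i < σ j := by
    push Not
    refine forall₂_congr fun j hj => ?_
    have : σ i ≠ σ j := fun e => hj.ne (σ.injective e).symm
    exact ⟨fun h => lt_of_le_of_ne h this, le_of_lt⟩
  rw [hiff]
  refine ⟨fun h => h.2, fun hi => ⟨?_, hi⟩⟩
  have hev : Even i.val := by
    by_contra hodd
    have h0 : 0 < i.val := by
      rcases Nat.eq_zero_or_pos i.val with h0 | h0
      · rw [h0] at hodd; exact absurd (by decide) hodd
      · exact h0
    have h1 := (upDown_iff_alt σ).1 h ⟨i.val - 1, by omega⟩ i (by simp; omega) i.2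
    have h2 : Even (i.val - 1) := by
      rw [Nat.not_even_iff_odd] at hodd
      exact Nat.Odd.sub_odd hodd odd_one
    rw [if_pos h2] at h1
    exact absurd h1 (lt_asymm (hi _ (by rw [Fin.lt_def]; simp; omega)))
  have hlt : i.val + 1 < 2 * n := by
    have := i.2
    obtain ⟨k, hk⟩ := hev
    omega
  refine ⟨⟨i.val + 1, hlt⟩, by rw [Fin.lt_def]; simp, ?_⟩
  have := h i hlt
  rwa [if_pos hev] at this

open scoped Classical in
/-- weighted count, alternating up to `a`, increasing from `b`. -/
noncomputable def wsum (n : ℕ) (x : ℝ) (a b : ℕ) : ℝ :=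
  ∑ σ : Equiv.Perm (Fin n), if Alt σ a ∧ Inc σ b then x ^ lrm σ else 0

lemma inc_of_ge {n : ℕ} (σ : Equiv.Perm (Fin n)) : Inc σ n := by
  intro i j h _; have := i.2; omega

lemma Apoly_eq (n : ℕ) (x : ℝ) : Apoly n x = wsum (2 * n) x (2 * n) (2 * n) := by
  unfold Apoly wsum
  refine Finset.sum_congr rfl fun σ _ => ?_
  by_cases h : UpDown σ
  · rw [if_pos h, if_pos ⟨(upDown_iff_alt σ).1 h, inc_of_ge σ⟩, mmp1_eq_lrm σ h]
  · rw [if_neg h, if_neg fun h' => h ((upDown_iff_alt σ).2 h'.1)]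

lemma wsum_zero (n : ℕ) (x : ℝ) : wsum n x 0 0 = wsum n x 2 0 := by
  unfold wsum
  refine Finset.sum_congr rfl fun σ _ => ?_
  congr 1
  rw [eq_iff_iff]
  constructor
  · rintro ⟨-, h⟩
    refine ⟨fun i j hij hj => ?_, h⟩
    rw [if_pos (by rw [show i.val = 0 by omega]; decide)]
    exact h i j (Nat.zero_le _) hij
  · rintro ⟨-, h⟩
    exact ⟨fun i j hij hj => by omega, h⟩

lemma wsum_last (M : ℕ) (x : ℝ) :
    wsum (2 * M + 2) x (2 * M + 2) (2 * M + 2) = wsum (2 * M + 2) x (2 * M + 2) (2 * M) := by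
  unfold wsum
  refine Finset.sum_congr rfl fun σ _ => ?_
  congr 1
  rw [eq_iff_iff]
  constructor
  · rintro ⟨h, -⟩
    refine ⟨h, fun i j hi hij => ?_⟩
    have := h i j hij j.2
    have := j.2
    rwa [if_pos (by rw [show i.val = 2 * M by omega]; exact even_two_mul M)] at *
  · rintro ⟨h, -⟩
    exact ⟨h, inc_of_ge σ⟩

lemma wsum_step (n k : ℕ) (x : ℝ) (hk : 2 * k + 2 < n) :
    wsum n x (2 * k + 2) (2 * k + 2) =
      wsum n x (2 * k + 2) (2 * k) + wsum n x (2 * k + 4) (2 * k + 2) := by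
  unfold wsum
  rw [← Finset.sum_add_distrib]
  refine Finset.sum_congr rfl fun σ _ => ?_
  set A : Fin n := ⟨2 * k + 1, by omega⟩
  set B : Fin n := ⟨2 * k + 2, by omega⟩
  have hne : σ A ≠ σ B := fun e => by
    have := σ.injective e
    simp [A, B] at this
  by_cases hP : Alt σ (2 * k + 2) ∧ Inc σ (2 * k + 2)
  · rw [if_pos hP]
    obtain ⟨hA, hI⟩ := hP
    rcases lt_or_gt_of_ne hne with hlt | hlt
    · rw [if_pos, if_neg, add_zero]
      · rintro ⟨h, -⟩
        have := h A B rfl (by simp [B])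
        rw [if_neg (by simp [A, parity_simps])] at this
        exact lt_asymm this hlt
      · refine ⟨hA, fun i j hi hij => ?_⟩
        rcases (by omega : i.val = 2 * k ∨ i.val = 2 * k + 1 ∨ 2 * k + 2 ≤ i.val) with h | h | h
        · have := hA i j hij (by omega)
          rwa [if_pos (by rw [h]; exact even_two_mul k)] at this
        · have e1 : i = A := Fin.ext h
          have e2 : j = B := Fin.ext (by simp [B]; omega)
          rwa [e1, e2]
        · exact hI i j h hij
    · rw [if_neg, if_pos, zero_add]
      · refine ⟨fun i j hij hj => ?_, hI⟩
        rcases (by omega : j.val < 2 * k + 2 ∨ i.val = 2 * k + 1 ∨ i.val = 2 * k + 2) with h | h | h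
        · exact hA i j hij h
        · have e1 : i = A := Fin.ext h
          have e2 : j = B := Fin.ext (by simp [B]; omega)
          rw [if_neg (by simp [h, parity_simps]), e1, e2]
          exact hlt
        · rw [if_pos (by simp [h, parity_simps])]
          exact hI i j (by omega) hij
      · rintro ⟨-, h⟩
        exact lt_asymm hlt (h A B (by simp [A]) rfl)
  · rw [if_neg hP, if_neg, if_neg, add_zero]
    · rintro ⟨h1, h2⟩
      exact hP ⟨fun i j hij hj => h1 i j hij (by omega), h2⟩
    · rintro ⟨h1, h2⟩
      exact hP ⟨h1, fun i j hi hij => h2 i j (by omega) hij⟩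

lemma wsum_tele (M : ℕ) (x : ℝ) :
    ∑ k ∈ Finset.range (M + 2), (-1 : ℝ) ^ k * wsum (2 * M + 2) x (2 * k) (2 * k) = 0 := by
  have h : ∀ m ≤ M, ∑ k ∈ Finset.range (m + 1), (-1 : ℝ) ^ k * wsum (2 * M + 2) x (2 * k) (2 * k)
      = (-1) ^ m * wsum (2 * M + 2) x (2 * m + 2) (2 * m) := by
    intro m
    induction m with
    | zero => intro _; simp [wsum_zero]
    | succ m ih =>
      intro hm
      rw [Finset.sum_range_succ, ih (by omega), mul_add, mul_one, wsum_step _ _ _ (by omega)]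
      ring_nf
  rw [Finset.sum_range_succ, h M le_rfl, mul_add, mul_one, wsum_last]
  ring

/-- glue a permutation and an increasing suffix -/
noncomputable def glue {a b : ℕ} (T : Finset (Fin (a + b))) (hT : T.card = a) (hTc : Tᶜ.card = b)
    (σ : Equiv.Perm (Fin a)) : Equiv.Perm (Fin (a + b)) :=
  finSumFinEquiv.symm.trans
    ((Equiv.sumCongr σ (Equiv.refl (Fin b))).trans (finSumEquivOfFinset hT hTc))

lemma glue_left {a b : ℕ} (T : Finset (Fin (a + b))) (hT : T.card = a) (hTc : Tᶜ.card = b)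
    (σ : Equiv.Perm (Fin a)) (i : Fin a) :
    glue T hT hTc σ (Fin.castAdd b i) = T.orderEmbOfFin hT (σ i) := by
  simp [glue]

lemma glue_right {a b : ℕ} (T : Finset (Fin (a + b))) (hT : T.card = a) (hTc : Tᶜ.card = b)
    (σ : Equiv.Perm (Fin a)) (i : Fin b) :
    glue T hT hTc σ (Fin.natAdd a i) = Tᶜ.orderEmbOfFin hTc i := by
  simp [glue]

lemma glue_alt {a b : ℕ} (T : Finset (Fin (a + b))) (hT : T.card = a) (hTc : Tᶜ.card = b)
    (σ : Equiv.Perm (Fin a)) : Alt (glue T hT hTc σ) a ↔ Alt σ a := by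
  constructor
  · intro h i j hij hj
    have := h (Fin.castAdd b i) (Fin.castAdd b j) hij hj
    simpa only [glue_left, OrderEmbedding.lt_iff_lt, Fin.val_castAdd] using this
  · intro h i j hij hj
    obtain ⟨i, rfl⟩ : ∃ i', i = Fin.castAdd b i' := ⟨⟨i.val, by omega⟩, rfl⟩
    obtain ⟨j, rfl⟩ : ∃ i', j = Fin.castAdd b i' := ⟨⟨j.val, by omega⟩, rfl⟩
    simpa only [glue_left, OrderEmbedding.lt_iff_lt, Fin.val_castAdd] using h i j hij hj

lemma glue_inc {a b : ℕ} (T : Finset (Fin (a + b))) (hT : T.card = a) (hTc : Tᶜ.card = b)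
    (σ : Equiv.Perm (Fin a)) : Inc (glue T hT hTc σ) a := by
  intro i j hi hij
  obtain ⟨i, rfl⟩ : ∃ i', i = Fin.natAdd a i' :=
    ⟨⟨i.val - a, by omega⟩, Fin.ext (by simp; omega)⟩
  obtain ⟨j, rfl⟩ : ∃ i', j = Fin.natAdd a i' :=
    ⟨⟨j.val - a, by omega⟩, Fin.ext (by simp; omega)⟩
  simp only [glue_right, OrderEmbedding.lt_iff_lt]
  rw [Fin.lt_def]
  simp at hij
  omega

open scoped Classical in
lemma glue_lrm {a b : ℕ} (T : Finset (Fin (a + b))) (hT : T.card = a) (hTc : Tᶜ.card = b)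
    (hab : 0 < a + b)
    (σ : Equiv.Perm (Fin a)) :
    lrm (glue T hT hTc σ) = lrm σ + if (⟨0, hab⟩ : Fin (a + b)) ∈ T then 0 else 1 := by
  unfold lrm
  rw [Finset.card_filter, Finset.card_filter, Fin.sum_univ_add]
  congr 1
  · refine Finset.sum_congr rfl fun i _ => ?_
    congr 1
    rw [eq_iff_iff]
    constructor
    · intro h j hj
      simpa only [glue_left, OrderEmbedding.lt_iff_lt] using h (Fin.castAdd b j) hj
    · intro h j hj
      have hj' := hj
      rw [Fin.lt_def] at hj'
      simp at hj'
      obtain ⟨j, rfl⟩ : ∃ i', j = Fin.castAdd b i' := ⟨⟨j.val, by omega⟩, rfl⟩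
      simpa only [glue_left, OrderEmbedding.lt_iff_lt] using h j hj
  · by_cases h0 : (⟨0, hab⟩ : Fin (a + b)) ∈ T
    · rw [if_pos h0]
      refine Finset.sum_eq_zero fun i _ => if_neg fun h => ?_
      have : (⟨0, hab⟩ : Fin (a + b)) ∈ Set.range (T.orderEmbOfFin hT) := by
        rw [Finset.range_orderEmbOfFin]; exact h0
      obtain ⟨j, hj⟩ := this
      have := h (Fin.castAdd b (σ.symm j)) (by rw [Fin.lt_def]; simp; omega)
      rw [glue_left, Equiv.apply_symm_apply, hj] at this
      exact absurd this (by rw [Fin.lt_def]; simp)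
    · rw [if_neg h0]
      have : (⟨0, hab⟩ : Fin (a + b)) ∈ Set.range (Tᶜ.orderEmbOfFin hTc) := by
        rw [Finset.range_orderEmbOfFin]; simpa using h0
      obtain ⟨i0, hi0⟩ := this
      rw [Finset.sum_eq_single i0]
      · rw [if_pos]
        intro j hj
        rw [glue_right, hi0]
        have hne : glue T hT hTc σ j ≠ ⟨0, hab⟩ := by
          rw [← hi0, ← glue_right T hT hTc σ]
          exact fun e => hj.ne ((glue T hT hTc σ).injective e)
        rw [Fin.lt_def]
        have : (glue T hT hTc σ j).val ≠ 0 := fun e => hne (Fin.ext e)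
        simp only
        omega
      · intro i _ hi
        refine if_neg fun h => ?_
        have hlt : i0 < i := by
          rw [← (Tᶜ.orderEmbOfFin hTc).lt_iff_lt, hi0, Fin.lt_def]
          have : (Tᶜ.orderEmbOfFin hTc i).val ≠ 0 := fun e => hi <| by
            apply (Tᶜ.orderEmbOfFin hTc).injective
            rw [hi0]; exact Fin.ext e
          simp only
          omega
        have := h (Fin.natAdd a i0) (by rw [Fin.lt_def] at *; simp; omega)
        rw [glue_right, glue_right, hi0] at this
        exact absurd this (by rw [Fin.lt_def]; simp)
      · intro h; exact absurd (Finset.mem_univ _) h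

lemma glue_image {a b : ℕ} (T : Finset (Fin (a + b))) (hT : T.card = a) (hTc : Tᶜ.card = b)
    (σ : Equiv.Perm (Fin a)) :
    Finset.univ.image (fun i : Fin a => glue T hT hTc σ (Fin.castAdd b i)) = T := by
  ext y
  simp only [Finset.mem_image, Finset.mem_univ, true_and, glue_left]
  constructor
  · rintro ⟨i, rfl⟩; exact Finset.orderEmbOfFin_mem _ _ _
  · intro hy
    have : y ∈ Set.range (T.orderEmbOfFin hT) := by
      rw [Finset.range_orderEmbOfFin]; exact hy
    obtain ⟨j, hj⟩ := this
    exact ⟨σ.symm j, by simpa using hj⟩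

lemma compl_card {a b : ℕ} (T : Finset (Fin (a + b))) (hT : T.card = a) : Tᶜ.card = b := by
  rw [Finset.card_compl, hT, Fintype.card_fin]; omega

lemma strictMono_of_inc {a b : ℕ} (τ : Equiv.Perm (Fin (a + b))) (h : Inc τ a) :
    StrictMono (fun i : Fin b => τ (Fin.natAdd a i)) := by
  rcases b with _ | b
  · intro i; exact i.elim0
  · rw [Fin.strictMono_iff_lt_succ]
    intro i
    exact h _ _ (by simp) (by simp; omega)

lemma exists_glue {a b : ℕ} (τ : Equiv.Perm (Fin (a + b))) (h : Inc τ a) :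
    ∃ (T : Finset (Fin (a + b))) (hT : T.card = a) (σ : Equiv.Perm (Fin a)),
      glue T hT (compl_card T hT) σ = τ := by
  have hinj : Function.Injective (fun i : Fin a => τ (Fin.castAdd b i)) :=
    fun i j e => Fin.castAdd_injective a b (τ.injective e)
  set T := Finset.univ.image (fun i : Fin a => τ (Fin.castAdd b i)) with hTdef
  have hT : T.card = a := by
    rw [hTdef, Finset.card_image_of_injective _ hinj]; simp
  have hmem : ∀ i : Fin a, τ (Fin.castAdd b i) ∈ T := fun i =>
    Finset.mem_image_of_mem _ (Finset.mem_univ i)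
  let f : Fin a → Fin a := fun i => (T.orderIsoOfFin hT).symm ⟨τ (Fin.castAdd b i), hmem i⟩
  have hf : Function.Injective f := by
    intro i j e
    have := (T.orderIsoOfFin hT).symm.injective e
    exact hinj (congrArg Subtype.val this)
  refine ⟨T, hT, Equiv.ofBijective f (Finite.injective_iff_bijective.1 hf), ?_⟩
  ext1 i
  refine Fin.addCases (fun i => ?_) (fun i => ?_) i
  · rw [glue_left, Equiv.ofBijective_apply, ← Finset.coe_orderIsoOfFin_apply]
    simp [f]
  · rw [glue_right]
    have := Finset.orderEmbOfFin_unique (compl_card T hT)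
      (f := fun i : Fin b => τ (Fin.natAdd a i)) ?_ (strictMono_of_inc τ h)
    · exact (congrFun this i).symm
    · intro i
      simp only [Finset.mem_compl, hTdef, Finset.mem_image, Finset.mem_univ, true_and, not_exists]
      intro j e
      have := congrArg Fin.val (τ.injective e)
      simp at this
      omega

open scoped Classical in
lemma wsum_split (n a b : ℕ) (hn : n = a + b) (hpos : 0 < n) (x : ℝ) :
    wsum n x a a = (∑ T ∈ Finset.powersetCard a (Finset.univ : Finset (Fin n)),
      if (⟨0, hpos⟩ : Fin n) ∈ T then (1 : ℝ) else x) * wsum a x a a := by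
  subst hn
  unfold wsum
  rw [← Finset.sum_coe_sort (Finset.powersetCard a _), Finset.sum_mul_sum, ← Fintype.sum_prod_type']
  symm
  have hc : ∀ T : Finset.powersetCard a (Finset.univ : Finset (Fin (a + b))), T.1.card = a :=
    fun T => (Finset.mem_powersetCard.1 T.2).2
  refine Finset.sum_of_injOn
    (fun q => glue q.1.1 (hc q.1) (compl_card _ (hc q.1)) q.2) ?_ ?_ ?_ ?_
  · rintro ⟨⟨T, hT⟩, σ⟩ - ⟨⟨T', hT'⟩, σ'⟩ - e
    have e' : T = T' := by
      have h1 := glue_image T (hc ⟨T, hT⟩) (compl_card _ (hc ⟨T, hT⟩)) σ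
      have h2 := glue_image T' (hc ⟨T', hT'⟩) (compl_card _ (hc ⟨T', hT'⟩)) σ'
      rw [← h1, ← h2]
      simp only at e
      rw [e]
    subst e'
    congr 1
    ext1 i
    have := congrArg (fun τ : Equiv.Perm (Fin (a + b)) => τ (Fin.castAdd b i)) e
    simp only [glue_left] at this
    exact (Finset.orderEmbOfFin _ _).injective this
  · intro q _; simp
  · intro τ _ hτ
    refine if_neg fun h => hτ ?_
    obtain ⟨T, hT, σ, e⟩ := exists_glue τ h.2
    exact ⟨(⟨T, Finset.mem_powersetCard.2 ⟨Finset.subset_univ _, hT⟩⟩, σ), by simp, e⟩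
  · rintro ⟨⟨T, hT⟩, σ⟩ -
    simp only [glue_alt, glue_inc, inc_of_ge, and_true, glue_lrm _ _ _ hpos]
    split_ifs <;> simp [pow_succ, mul_comm]

open scoped Classical in
lemma count_T (N a : ℕ) (x : ℝ) :
    (∑ T ∈ Finset.powersetCard a (Finset.univ : Finset (Fin (N + 1))),
      if (⟨0, Nat.succ_pos N⟩ : Fin (N + 1)) ∈ T then (1 : ℝ) else x) =
    ((N + 1).choose a - N.choose a : ℝ) + x * N.choose a := by
  have h0 : (Finset.powersetCard a (Finset.univ : Finset (Fin (N + 1)))).filter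
      (fun T => ¬ (⟨0, Nat.succ_pos N⟩ : Fin (N + 1)) ∈ T) =
      Finset.powersetCard a (Finset.univ.erase ⟨0, Nat.succ_pos N⟩) := by
    ext T
    simp only [Finset.mem_filter, Finset.mem_powersetCard, Finset.subset_erase]
    tauto
  have h1 := Finset.card_filter_add_card_filter_not
    (s := Finset.powersetCard a (Finset.univ : Finset (Fin (N + 1))))
    (fun T => (⟨0, Nat.succ_pos N⟩ : Fin (N + 1)) ∈ T)
  rw [Finset.sum_ite, Finset.sum_const, Finset.sum_const]
  rw [h0] at h1 ⊢
  simp only [Finset.card_powersetCard, Finset.card_erase_of_mem (Finset.mem_univ _),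
    Finset.card_univ, Fintype.card_fin, Nat.add_sub_cancel] at h1 ⊢
  have h2 : (((Finset.powersetCard a (Finset.univ : Finset (Fin (N + 1)))).filter
      (fun T => (⟨0, Nat.succ_pos N⟩ : Fin (N + 1)) ∈ T)).card : ℝ) + N.choose a
      = (N + 1).choose a := by exact_mod_cast h1
  rw [← h2]
  simp
  ring

lemma Apoly_rec (x : ℝ) (M : ℕ) : ∑ k ∈ Finset.range (M + 1), (-1 : ℝ) ^ k *
      (((2 * M + 1).choose (2 * k + 1) : ℝ) * Apoly (k + 1) x
        - x * ((2 * M + 1).choose (2 * k) : ℝ) * Apoly k x) = 0 := by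
  have h := wsum_tele M x
  have e : ∀ k ∈ Finset.range (M + 2), (-1 : ℝ) ^ k * wsum (2 * M + 2) x (2 * k) (2 * k) =
      (-1) ^ k * (((2 * M + 1 + 1).choose (2 * k) - (2 * M + 1).choose (2 * k) : ℝ)) * Apoly k x +
      (-1) ^ k * (x * (2 * M + 1).choose (2 * k)) * Apoly k x := by
    intro k hk
    rw [Finset.mem_range] at hk
    rw [wsum_split (2 * M + 1 + 1) (2 * k) (2 * M + 2 - 2 * k) (by omega) (by omega), count_T,
      Apoly_eq]
    ring
  rw [Finset.sum_congr rfl e, Finset.sum_add_distrib, Finset.sum_range_succ', Finset.sum_range_succ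
    (fun k => (-1 : ℝ) ^ k * (x * (2 * M + 1).choose (2 * k)) * Apoly k x)] at h
  rw [Nat.choose_eq_zero_of_lt (show 2 * M + 1 < 2 * (M + 1) by omega)] at h
  simp only [mul_zero, Nat.choose_zero_right, Nat.cast_zero, sub_self, zero_mul, add_zero] at h
  rw [← Finset.sum_add_distrib] at h
  rw [← neg_eq_zero, ← Finset.sum_neg_distrib, ← h]
  refine Finset.sum_congr rfl fun k _ => ?_
  rw [show 2 * (k + 1) = 2 * k + 1 + 1 by ring, Nat.choose_succ_succ (2 * M + 1) (2 * k + 1)]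
  push_cast
  ring

lemma Apoly_zero (x : ℝ) : Apoly 0 x = 1 := by
  rw [Apoly_eq]
  unfold wsum
  have : ∀ σ : Equiv.Perm (Fin (2 * 0)), (Alt σ (2 * 0) ∧ Inc σ (2 * 0)) ∧ lrm σ = 0 := by
    intro σ
    exact ⟨⟨fun i => i.elim0, fun i => i.elim0⟩, rfl⟩
  simp [this]

lemma sum_range_pairs {R : Type*} [AddCommMonoid R] (F : ℕ → R) (M : ℕ) :
    ∑ i ∈ Finset.range (2 * M), F i = ∑ k ∈ Finset.range M, (F (2 * k) + F (2 * k + 1)) := by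
  induction M with
  | zero => simp
  | succ M ih =>
    rw [Finset.sum_range_succ, ← ih, mul_add, mul_one, Finset.sum_range_succ, Finset.sum_range_succ,
      add_assoc]

lemma rec_unique (x : ℂ) (a b : ℕ → ℂ) (h0 : a 0 = b 0)
    (ha : ∀ M, ∑ k ∈ Finset.range (M + 1), (-1 : ℂ) ^ k *
      (((2 * M + 1).choose (2 * k + 1) : ℂ) * a (k + 1) - x * ((2 * M + 1).choose (2 * k) : ℂ) * a k) = 0)
    (hb : ∀ M, ∑ k ∈ Finset.range (M + 1), (-1 : ℂ) ^ k *
      (((2 * M + 1).choose (2 * k + 1) : ℂ) * b (k + 1) - x * ((2 * M + 1).choose (2 * k) : ℂ) * b k) = 0)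
    (n : ℕ) : a n = b n := by
  induction n using Nat.strong_induction_on with
  | _ n ih =>
    rcases n with _ | M
    · exact h0
    · have h1 := ha M
      have h2 := hb M
      rw [Finset.sum_range_succ] at h1 h2
      have h3 : ∑ k ∈ Finset.range M, (-1 : ℂ) ^ k *
          (((2 * M + 1).choose (2 * k + 1) : ℂ) * a (k + 1)
            - x * ((2 * M + 1).choose (2 * k) : ℂ) * a k) =
          ∑ k ∈ Finset.range M, (-1 : ℂ) ^ k *
          (((2 * M + 1).choose (2 * k + 1) : ℂ) * b (k + 1)
            - x * ((2 * M + 1).choose (2 * k) : ℂ) * b k) := by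
        refine Finset.sum_congr rfl fun k hk => ?_
        rw [Finset.mem_range] at hk
        rw [ih k (by omega), ih (k + 1) (by omega)]
      rw [h3, ih M (by omega)] at h1
      have h4 := h1.trans h2.symm
      have h5 := mul_left_cancel₀ (pow_ne_zero M (by norm_num : (-1 : ℂ) ≠ 0)) (add_left_cancel h4)
      simpa using h5

lemma cos_slit (z : ℂ) (hz : z ∈ Metric.ball (0 : ℂ) (Real.pi / 2)) :
    Complex.cos z ∈ Complex.slitPlane := by
  left
  rw [Complex.cos_eq]
  have h : 0 < Real.cos z.re * Real.cosh z.im := by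
    refine mul_pos (Real.cos_pos_of_mem_Ioo ?_) (Real.cosh_pos _)
    have h1 := Complex.abs_re_le_norm z
    have h2 : ‖z‖ < Real.pi / 2 := by simpa using hz
    have := abs_lt.1 (h1.trans_lt h2)
    exact ⟨by linarith [this.1], this.2⟩
  simpa [← Complex.ofReal_cos, ← Complex.ofReal_cosh, ← Complex.ofReal_sin, ← Complex.ofReal_sinh] using h

noncomputable def secx (x : ℂ) (z : ℂ) : ℂ := Complex.cos z ^ (-x)

lemma secx_hasDeriv (x z : ℂ) (hz : z ∈ Metric.ball (0 : ℂ) (Real.pi / 2)) :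
    HasDerivAt (secx x) (x * Complex.cos z ^ (-x - 1) * Complex.sin z) z := by
  have := (Complex.hasDerivAt_cos z).cpow_const (c := -x) (cos_slit z hz)
  convert! this using 1
  ring

lemma secx_diff (x : ℂ) : DifferentiableOn ℂ (secx x) (Metric.ball (0 : ℂ) (Real.pi / 2)) :=
  fun z hz => (secx_hasDeriv x z hz).differentiableAt.differentiableWithinAt

lemma ball_nhds : Metric.ball (0 : ℂ) (Real.pi / 2) ∈ nhds (0 : ℂ) :=
  Metric.ball_mem_nhds _ (by positivity)

lemma secx_rec (x : ℂ) (M : ℕ) : ∑ k ∈ Finset.range (M + 1), (-1 : ℂ) ^ k *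
      (((2 * M + 1).choose (2 * k + 1) : ℂ) * iteratedDeriv (2 * (k + 1)) (secx x) 0
        - x * ((2 * M + 1).choose (2 * k) : ℂ) * iteratedDeriv (2 * k) (secx x) 0) = 0 := by
  have hEq : (deriv (secx x) * Complex.cos) =ᶠ[nhds 0]
      (fun z => x * (secx x * Complex.sin) z) := by
    filter_upwards [ball_nhds] with z hz
    simp only [Pi.mul_apply]
    rw [(secx_hasDeriv x z hz).deriv]
    have hc : Complex.cos z ≠ 0 := Complex.slitPlane_ne_zero (cos_slit z hz)
    rw [Complex.cpow_sub _ _ hc, Complex.cpow_one, secx]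
    field_simp
  have hA : AnalyticAt ℂ (secx x) 0 := (secx_diff x).analyticAt ball_nhds
  have h1 := hEq.iteratedDeriv_eq (2 * M + 1)
  rw [iteratedDeriv_mul (hA.deriv.contDiffAt) Complex.contDiff_cos.contDiffAt,
    iteratedDeriv_const_mul_field,
    iteratedDeriv_mul (hA.contDiffAt) Complex.contDiff_sin.contDiffAt,
    show 2 * M + 1 + 1 = 2 * (M + 1) by ring, sum_range_pairs, sum_range_pairs,
    Finset.mul_sum, ← sub_eq_zero, ← Finset.sum_sub_distrib] at h1
  have h2 : ∀ k ∈ Finset.range (M + 1), (-1 : ℂ) ^ k *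
      (((2 * M + 1).choose (2 * k + 1) : ℂ) * iteratedDeriv (2 * (k + 1)) (secx x) 0
        - x * ((2 * M + 1).choose (2 * k) : ℂ) * iteratedDeriv (2 * k) (secx x) 0) =
      (-1) ^ M * (((2 * M + 1).choose (2 * k) * iteratedDeriv (2 * k) (deriv (secx x)) 0 *
        iteratedDeriv (2 * M + 1 - 2 * k) Complex.cos 0 +
        (2 * M + 1).choose (2 * k + 1) * iteratedDeriv (2 * k + 1) (deriv (secx x)) 0 *
        iteratedDeriv (2 * M + 1 - (2 * k + 1)) Complex.cos 0) -
        x * ((2 * M + 1).choose (2 * k) * iteratedDeriv (2 * k) (secx x) 0 *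
        iteratedDeriv (2 * M + 1 - 2 * k) Complex.sin 0 +
        (2 * M + 1).choose (2 * k + 1) * iteratedDeriv (2 * k + 1) (secx x) 0 *
        iteratedDeriv (2 * M + 1 - (2 * k + 1)) Complex.sin 0)) := by
    intro k hk
    rw [Finset.mem_range] at hk
    obtain ⟨j, rfl⟩ : ∃ j, M = k + j := ⟨M - k, by omega⟩
    rw [show 2 * (k + j) + 1 - 2 * k = 2 * j + 1 by omega,
      show 2 * (k + j) + 1 - (2 * k + 1) = 2 * j by omega,
      Complex.iteratedDeriv_odd_cos, Complex.iteratedDeriv_even_cos,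
      Complex.iteratedDeriv_odd_sin, Complex.iteratedDeriv_even_sin, ← iteratedDeriv_succ' (n := 2 * k + 1),
      show 2 * k + 1 + 1 = 2 * (k + 1) by ring]
    have e : (-1 : ℂ) ^ (k + j) * (-1) ^ j = (-1) ^ k := by
      rw [pow_add, mul_assoc, ← mul_pow]; simp
    rw [← e]
    simp
    ring
  rw [Finset.sum_congr rfl h2, ← Finset.mul_sum, h1, mul_zero]

lemma secx_hasSum (x z : ℂ) (hz : z ∈ Metric.ball (0 : ℂ) (Real.pi / 2)) :
    HasSum (fun n : ℕ => iteratedDeriv (2 * n) (secx x) 0 * z ^ (2 * n) / ((2 * n).factorial : ℂ))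
      (secx x z) := by
  have h1 := Complex.hasSum_taylorSeries_on_ball (secx_diff x) hz
  have h2 := Complex.hasSum_taylorSeries_on_ball (secx_diff x) (z := -z) (by simpa using hz)
  have h3 := ((h1.add h2).mul_left (1 / 2))
  have e : secx x (-z) = secx x z := by simp [secx]
  rw [e, ← two_mul, ← mul_assoc, one_div, inv_mul_cancel₀ two_ne_zero, one_mul] at h3
  have hinj : Function.Injective (fun n : ℕ => 2 * n) := fun a b h => by simpa using h
  rw [← hinj.hasSum_iff] at h3
  · convert! h3 using 2 with n
    simp
    ring
  · intro n hn
    have : Odd n := by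
      rw [← Nat.not_even_iff_odd]
      rintro ⟨k, rfl⟩
      exact hn ⟨k, by simp; ring⟩
    simp [this.neg_pow]

lemma analytic_part (x t : ℝ) (ht : |t| < Real.pi / 2) (a : ℕ → ℝ) (h0 : a 0 = 1)
    (ha : ∀ M, ∑ k ∈ Finset.range (M + 1), (-1 : ℝ) ^ k *
      (((2 * M + 1).choose (2 * k + 1) : ℝ) * a (k + 1)
        - x * ((2 * M + 1).choose (2 * k) : ℝ) * a k) = 0) :
    HasSum (fun n : ℕ => a n * t ^ (2 * n) / ((2 * n).factorial : ℝ)) (Real.cos t ^ (-x)) := by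
  have hz : (t : ℂ) ∈ Metric.ball (0 : ℂ) (Real.pi / 2) := by simpa using ht
  have h := secx_hasSum x t hz
  have key : ∀ n, iteratedDeriv (2 * n) (secx x) 0 = (a n : ℂ) := by
    refine rec_unique x _ _ (by simp [secx, h0]) (secx_rec x) ?_
    intro M
    exact_mod_cast congrArg (fun r : ℝ => (r : ℂ)) (ha M)
  simp only [key] at h
  have hc : 0 ≤ Real.cos t := (Real.cos_pos_of_mem_Ioo
    ⟨by linarith [(abs_lt.1 ht).1], (abs_lt.1 ht).2⟩).le
  have e : secx x t = ((Real.cos t ^ (-x) : ℝ) : ℂ) := by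
    rw [secx, Complex.ofReal_cpow hc]; simp
  rw [e] at h
  rw [← Complex.hasSum_ofReal]
  exact_mod_cast h
theorem stmt2 (x t : ℝ) (ht : |t| < Real.pi / 2) :
    HasSum (fun n : ℕ => if n = 0 then (1 : ℝ)
        else Apoly n x * t ^ (2*n) / (Nat.factorial (2*n) : ℝ))
      (Real.cos t ^ (-x)) := by
  have h := analytic_part x t ht (fun n => Apoly n x) (Apoly_zero x) (Apoly_rec x)
  convert! h using 2 with n
  split_ifs with hn
  · subst hn
    simp [Apoly_zero]
  · rfl
end

section
/- For every real number x and every real t with |t| < π/2, the series 1 + Σ_{n≥1} C̄^{(1,0,∅,0)}_{2n}(x) · t^{2n}/(2n)! converges and its sum equals 1 + ∫_0^t x·(sec z)^x·(1 − x + x·sec z)·(∫_0^z (cos y)^x dy) dz, where sec z = 1/cos z. -/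
open scoped Classical in
/-- `C̄^{(1,0,∅,0)}_{2n+2}(x) = Σ_{σ ∈ DU_{2n+2}} x^{mmp^{(1,0,∅,0)}(σ) + χ(σ_1 = 2n+2)}`,
where `χ(σ_1 = 2n+2)` is 1 if the first entry of `σ` is the largest value `2n+2`
(i.e. `2*n+1` as an element of `Fin (2n+2)`) and 0 otherwise.
`Cbar n x` is `C̄^{(1,0,∅,0)}_{2m}(x)` for `m = n+1`. -/
noncomputable def Cbar (n : ℕ) (x : ℝ) : ℝ :=
  ∑ σ : Equiv.Perm (Fin (2*n+2)), if DownUp σ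
    then x ^ (mmp1 σ + if (σ ⟨0, by omega⟩).val = 2*n+1 then 1 else 0) else 0


open scoped Classical in
/-- The finite set of all arrangements (as lists) of the elements of `s`. -/
noncomputable def arr {α : Type*} (s : Finset α) : Finset (List α) :=
  s.toList.permutations.toFinset

theorem mem_arr {α : Type*} [DecidableEq α] {s : Finset α} {l : List α} :
    l ∈ arr s ↔ l.Nodup ∧ l.toFinset = s := by
  have e : l ∈ arr s ↔ l.Perm s.toList := by
    classical
    unfold arr
    rw [@List.mem_toFinset _ (_), List.mem_permutations]
  rw [e]
  constructor
  · intro h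
    refine ⟨h.nodup_iff.2 s.nodup_toList, ?_⟩
    ext a
    simp [h.mem_iff]
  · rintro ⟨h1, rfl⟩
    rw [List.perm_ext_iff_of_nodup h1 (Finset.nodup_toList _)]
    intro a; simp

theorem arr_empty {α : Type*} : arr (∅ : Finset α) = {[]} := by
  simp [arr]

theorem length_of_mem_arr {α : Type*} {s : Finset α} {l : List α} (h : l ∈ arr s) :
    l.length = s.card := by
  classical
  obtain ⟨h1, rfl⟩ := mem_arr.1 h
  rw [List.toFinset_card_of_nodup h1]

theorem sum_arr_split {α R : Type*} [DecidableEq α] [AddCommMonoid R] {s : Finset α} {m : α}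
    (hm : m ∈ s) (F : List α → R) :
    ∑ l ∈ arr s, F l = ∑ A ∈ (s.erase m).powerset, ∑ p ∈ arr A ×ˢ arr ((s.erase m) \ A),
      F (p.1 ++ m :: p.2) := by
  rw [Finset.sum_sigma']
  symm
  refine Finset.sum_bij (fun q _ => q.2.1 ++ m :: q.2.2) ?_ ?_ ?_ ?_
  · rintro ⟨A, l1, l2⟩ h
    simp only [Finset.mem_sigma, Finset.mem_powerset, Finset.mem_product, mem_arr] at h ⊢
    obtain ⟨h1, ⟨h2, h3⟩, h4, h5⟩ := h
    have e1 : ∀ a, a ∈ l1 ↔ a ∈ A := fun a => by rw [← h3]; simp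
    have e2 : ∀ a, a ∈ l2 ↔ a ∈ (s.erase m) \ A := fun a => by rw [← h5]; simp
    constructor
    · rw [List.nodup_append]
      refine ⟨h2, ?_, ?_⟩
      · rw [List.nodup_cons]
        refine ⟨?_, h4⟩
        rw [e2]; simp
      · intro a ha b hb
        rw [e1] at ha
        have := h1 ha
        rw [List.mem_cons, e2] at hb
        rcases hb with rfl | hb
        · rintro rfl; simp at this
        · rintro rfl; simp [ha] at hb
    · ext a
      simp only [List.mem_toFinset, List.mem_append, List.mem_cons, e1, e2]
      have := @h1 a
      simp only [Finset.mem_sdiff, Finset.mem_erase] at this ⊢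
      by_cases ha : a = m
      · subst ha; simp [hm]
      · by_cases hA : a ∈ A
        · simp [hA, (this hA).2]
        · simp [hA, ha]
  · rintro ⟨A, l1, l2⟩ h ⟨A', l1', l2'⟩ h' he
    simp only [Finset.mem_sigma, Finset.mem_powerset, Finset.mem_product, mem_arr] at h h' he
    obtain ⟨h1, ⟨h2, h3⟩, h4, h5⟩ := h
    obtain ⟨h1', ⟨h2', h3'⟩, h4', h5'⟩ := h'
    have n1 : m ∉ l1 := fun hh => by
      have : m ∈ A := by rw [← h3]; simpa using hh
      simpa using h1 this
    have n1' : m ∉ l1' := fun hh => by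
      have : m ∈ A' := by rw [← h3']; simpa using hh
      simpa using h1' this
    have n2 : m ∉ l2 := fun hh => by
      have : m ∈ (s.erase m) \ A := by rw [← h5]; simpa using hh
      simp at this
    have n2' : m ∉ l2' := fun hh => by
      have : m ∈ (s.erase m) \ A' := by rw [← h5']; simpa using hh
      simp at this
    have : l1 = l1' ∧ l2 = l2' := by
      rw [List.append_eq_append_iff] at he
      rcases he with ⟨a, e1, e2⟩ | ⟨a, e1, e2⟩
      · cases a with
        | nil => simp_all
        | cons b t => simp_all
      · cases a with
        | nil => simp_all
        | cons b t => simp_all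
    obtain ⟨rfl, rfl⟩ := this
    have : A = A' := by rw [← h3, ← h3']
    subst this; rfl
  · intro l hl
    rw [mem_arr] at hl
    obtain ⟨h1, h2⟩ := hl
    have hml : m ∈ l := by rw [← List.mem_toFinset, h2]; exact hm
    obtain ⟨l1, l2, rfl⟩ := List.append_of_mem hml
    rw [List.nodup_append, List.nodup_cons] at h1
    obtain ⟨g1, ⟨g2, g3⟩, g4⟩ := h1
    refine ⟨⟨l1.toFinset, l1, l2⟩, ?_, rfl⟩
    simp only [Finset.mem_sigma, Finset.mem_powerset, Finset.mem_product, mem_arr]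
    refine ⟨?_, ⟨g1, by trivial⟩, g3, ?_⟩
    · intro a ha
      rw [← h2]
      simp only [List.mem_toFinset] at ha
      simp [ha]
      exact g4 a ha m (by simp)
    · rw [← h2]
      ext a
      simp only [List.mem_toFinset, Finset.mem_sdiff, Finset.mem_erase, List.mem_append, List.mem_cons]
      constructor
      · intro ha
        refine ⟨⟨?_, by simp [ha]⟩, fun hh => g4 a hh a (by simp [ha]) rfl⟩
        rintro rfl; exact g2 ha
      · tauto
  · intros; rfl

/-- Alternation `l_0 > l_1 < l_2 > ⋯` of a list. -/
def LDU {α : Type*} [LinearOrder α] (l : List α) : Prop :=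
  ∀ i, ∀ h : i + 1 < l.length, if Even i then l[i+1] < l[i] else l[i] < l[i+1]

open scoped Classical in
/-- The set of positions of left-to-right minima of a list. -/
noncomputable def lrset {α : Type*} [LinearOrder α] (l : List α) : Finset ℕ :=
  {i ∈ Finset.range l.length | ∀ j, ∀ hi : i < l.length, ∀ hj : j < i, l[i] < l[j]}

theorem LDU_split {α : Type*} [LinearOrder α] {A B : List α} {m : α}
    (hA : ∀ a ∈ A, m < a) (hB : ∀ b ∈ B, m < b) :
    LDU (A ++ m :: B) ↔ (Odd A.length ∧ LDU A ∧ LDU B) ∨ (A = [] ∧ B = []) := by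
  constructor
  · intro h
    rcases Nat.even_or_odd A.length with he | ho
    · right
      have hA0 : A = [] := by
        by_contra hne
        have hpos : 0 < A.length := List.length_pos_iff.2 hne
        have := h (A.length - 1) (by simp; omega)
        rw [if_neg (by rw [Nat.even_sub' (by omega)]; simp; exact he)] at this
        have e1 : A.length - 1 + 1 = A.length := by omega
        have g : (A ++ m :: B)[A.length - 1]'(by simp; omega) = A[A.length - 1] :=
          List.getElem_append_left _
        have g2 : (A ++ m :: B)[A.length - 1 + 1]'(by simp; omega) = m := by simp [e1]
        rw [g, g2] at this
        exact absurd this (not_lt.2 (hA _ (List.getElem_mem _)).le)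
      subst hA0
      refine ⟨rfl, ?_⟩
      cases B with
      | nil => rfl
      | cons b t =>
        have := h 0 (by simp)
        simp at this
        exact absurd this (not_lt.2 (hB b (by simp)).le)
    · left
      refine ⟨ho, ?_, ?_⟩
      · intro i hi
        have := h i (by simp; omega)
        rwa [List.getElem_append_left (by omega), List.getElem_append_left (by omega)] at this
      · intro i hi
        have := h (A.length + 1 + i) (by simp; omega)
        rw [List.getElem_append_right (by omega), List.getElem_append_right (by omega)] at this
        have e1 : A.length + 1 + i + 1 - A.length = i + 1 + 1 := by omega
        have e2 : A.length + 1 + i - A.length = i + 1 := by omega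
        have e3 : Even (A.length + 1 + i) ↔ Even i := by
          have := Nat.even_add_one.2 (Nat.not_even_iff_odd.2 ho)
          simp only [Nat.even_add (m := A.length + 1), this, true_iff]
        simpa only [e1, e2, e3, List.getElem_cons_succ] using this
  · rintro (⟨ho, h1, h2⟩ | ⟨rfl, rfl⟩)
    · intro i hi
      simp only [List.length_append, List.length_cons] at hi
      rcases lt_trichotomy (i + 1) A.length with hlt | heq | hgt
      · rw [List.getElem_append_left (by omega), List.getElem_append_left (by omega)]
        exact h1 i hlt
      · have he : Even i := by
          rw [← heq] at ho
          by_contra hc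
          exact (Nat.not_odd_iff_even.2 (Nat.even_add_one.2 hc)) ho
        rw [if_pos he, List.getElem_append_left (by omega : i < A.length), List.getElem_append_right (by omega)]
        simp only [heq, Nat.sub_self, List.getElem_cons_zero]
        exact hA _ (List.getElem_mem _)
      · rcases eq_or_lt_of_le (Nat.lt_succ_iff.1 hgt) with heq | hgt
        · subst heq
          rw [if_neg (by simpa using ho)]
          rw [List.getElem_append_right (by omega), List.getElem_append_right (by omega)]
          simp
          exact hB _ (List.getElem_mem _)
        · obtain ⟨j, rfl⟩ := Nat.exists_eq_add_of_lt hgt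
          have e1 : A.length + j + 1 + 1 - A.length = j + 1 + 1 := by omega
          have e2 : A.length + j + 1 - A.length = j + 1 := by omega
          have e3 : Even (A.length + j + 1) ↔ Even j := by
            have := Nat.even_add_one.2 (Nat.not_even_iff_odd.2 ho)
            rw [add_right_comm]
            simp only [Nat.even_add (m := A.length + 1), this, true_iff]
          rw [List.getElem_append_right (by omega), List.getElem_append_right (by omega)]
          simp only [e1, e2, e3, List.getElem_cons_succ]
          exact h2 j (by omega)
    · intro i hi
      simp at hi

theorem lrset_split {α : Type*} [LinearOrder α] {A B : List α} {m : α}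
    (hA : ∀ a ∈ A, m < a) (hB : ∀ b ∈ B, m < b) :
    (lrset (A ++ m :: B)).card = (lrset A).card + 1 := by
  have : lrset (A ++ m :: B) = insert A.length (lrset A) := by
    ext i
    simp only [lrset, Finset.mem_filter, Finset.mem_range, Finset.mem_insert, List.length_append,
      List.length_cons]
    rcases lt_trichotomy i A.length with hlt | heq | hgt
    · have h1 : ¬ i = A.length := by omega
      have h2 : i < A.length + (B.length + 1) := by omega
      simp only [h1, h2, hlt, false_or, true_and]
      refine forall_congr' fun j => ⟨fun h _ hj => ?_, fun h _ hj => ?_⟩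
      · have := h (by trivial) hj
        rwa [List.getElem_append_left (by omega), List.getElem_append_left (by omega)] at this
      · rw [List.getElem_append_left (by omega), List.getElem_append_left (by omega)]
        exact h (by trivial) hj
    · subst heq
      simp only [true_or, iff_true]
      refine ⟨by omega, fun j _ hj => ?_⟩
      rw [List.getElem_append_left hj]
      simp
      exact hA _ (List.getElem_mem _)
    · have h1 : ¬ i = A.length := by omega
      have h2 : ¬ i < A.length := by omega
      simp only [h1, h2, false_or, false_and, iff_false]
      rintro ⟨h3, h⟩
      have := h A.length h3 hgt
      rw [List.getElem_append_right (by omega)] at this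
      simp only [List.getElem_append_right (le_refl _), Nat.sub_self, List.getElem_cons_zero] at this
      obtain ⟨k, hk⟩ : ∃ k, i - A.length = k + 1 := ⟨i - A.length - 1, by omega⟩
      simp only [hk, List.getElem_cons_succ] at this
      exact absurd this (not_lt.2 (hB _ (List.getElem_mem _)).le)
  rw [this, Finset.card_insert_of_notMem]
  simp [lrset]

open scoped Classical in
/-- Weight of a list: `x` to the number of left-to-right minima, for alternating lists. -/
noncomputable def wt {α R : Type*} [LinearOrder α] [CommRing R] (x : R) (l : List α) : R :=
  if LDU l then x ^ (lrset l).card else 0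

open scoped Classical in
/-- Weight of a list where the last entry is not counted. -/
noncomputable def wtl {α R : Type*} [LinearOrder α] [CommRing R] (x : R) (l : List α) : R :=
  if LDU l then x ^ (lrset l.dropLast).card else 0

theorem wt_nil {α R : Type*} [LinearOrder α] [CommRing R] (x : R) : wt x ([] : List α) = 1 := by
  simp [wt, LDU, lrset]

theorem wt_split {α R : Type*} [LinearOrder α] [CommRing R] (x : R) {A B : List α} {m : α}
    (hA : ∀ a ∈ A, m < a) (hB : ∀ b ∈ B, m < b) :
    wt x (A ++ m :: B) = if Odd A.length then wt x A * x * wt 1 B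
      else if A.length = 0 ∧ B.length = 0 then x else 0 := by
  unfold wt
  rw [LDU_split hA hB, lrset_split hA hB]
  by_cases ho : Odd A.length
  · have : A ≠ [] := by rintro rfl; simp at ho
    by_cases h1 : LDU A <;> by_cases h2 : LDU B <;> simp [ho, h1, h2, this, pow_succ]
  · by_cases h : A = [] ∧ B = []
    · obtain ⟨rfl, rfl⟩ := h
      simp [lrset]
    · simp [ho, h]

theorem wtl_split {α R : Type*} [LinearOrder α] [CommRing R] (x : R) {A B : List α} {m : α}
    (hA : ∀ a ∈ A, m < a) (hB : ∀ b ∈ B, m < b) (hO : Odd (A.length + B.length)) :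
    wtl x (A ++ m :: B) = if Odd A.length then wt x A * (if B.length = 0 then 1 else x) * wt 1 B
      else 0 := by
  unfold wt wtl
  rw [LDU_split hA hB]
  have h0 : ¬ (A = [] ∧ B = []) := by rintro ⟨rfl, rfl⟩; simp at hO
  by_cases hB0 : B = []
  · subst hB0
    have : LDU ([] : List α) := by simp [LDU]
    by_cases ho : Odd A.length <;> by_cases h1 : LDU A <;> simp [ho, h1, this]
    all_goals rintro rfl; simp at hO
  · have e : (A ++ m :: B).dropLast = A ++ m :: B.dropLast := by
      rw [List.dropLast_append_of_ne_nil (by simp)]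
      cases B with
      | nil => exact absurd rfl hB0
      | cons b t => simp
    rw [e, lrset_split hA (fun b hb => hB b (List.mem_of_mem_dropLast hb))]
    by_cases ho : Odd A.length <;> by_cases h1 : LDU A <;> by_cases h2 : LDU B <;>
      simp [ho, h1, h2, hB0, pow_succ]

theorem sum_powerset_card {α R : Type*} [DecidableEq α] [CommRing R] (s : Finset α) (f : ℕ → R) :
    ∑ A ∈ s.powerset, f A.card = ∑ k ∈ Finset.range (s.card + 1), (s.card.choose k : R) * f k := by
  rw [Finset.sum_powerset_apply_card]
  simp [nsmul_eq_mul]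

theorem sum_wt_step {α R : Type*} [LinearOrder α] [CommRing R] (x : R) (W N : ℕ → R)
    (s : Finset α) (n : ℕ) (hs : s.card = n + 1)
    (hW : ∀ u : Finset α, u.card ≤ n → ∑ l ∈ arr u, wt x l = W u.card)
    (hN : ∀ u : Finset α, u.card ≤ n → ∑ l ∈ arr u, wt 1 l = N u.card) :
    ∑ l ∈ arr s, wt x l = (if n = 0 then x else 0) + ∑ k ∈ Finset.range (n + 1),
      (n.choose k : R) * if Odd k then W k * x * N (n - k) else 0 := by
  have hne : s.Nonempty := by rw [← Finset.card_pos]; omega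
  set m := s.min' hne with hm
  have hms : m ∈ s := Finset.min'_mem _ _
  have hlt : ∀ a ∈ s.erase m, m < a := fun a ha => Finset.min'_lt_of_mem_erase_min' _ _ ha
  have hc : (s.erase m).card = n := by rw [Finset.card_erase_of_mem hms]; omega
  rw [sum_arr_split hms]
  have key : ∀ A ∈ (s.erase m).powerset, ∑ p ∈ arr A ×ˢ arr ((s.erase m) \ A),
      wt x (p.1 ++ m :: p.2) = (fun k => (if Odd k then W k * x * N (n - k) else 0) +
        if k = 0 ∧ n = 0 then x else 0) A.card := by
    intro A hA
    rw [Finset.mem_powerset] at hA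
    have hAc : A.card ≤ n := hc ▸ Finset.card_le_card hA
    have hBc : ((s.erase m) \ A).card = n - A.card := by rw [Finset.card_sdiff_of_subset hA, hc]
    have h1 : ∀ p ∈ arr A ×ˢ arr ((s.erase m) \ A), wt x (p.1 ++ m :: p.2) =
        if Odd A.card then wt x p.1 * x * wt 1 p.2
          else if A.card = 0 ∧ n - A.card = 0 then x else 0 := by
      rintro ⟨l1, l2⟩ hp
      rw [Finset.mem_product] at hp
      obtain ⟨hp1, hp2⟩ := hp
      dsimp only at hp1 hp2 ⊢
      rw [wt_split, length_of_mem_arr hp1, length_of_mem_arr hp2, hBc]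
      · intro a ha
        rw [← List.mem_toFinset, (mem_arr.1 hp1).2] at ha
        exact hlt a (hA ha)
      · intro a ha
        rw [← List.mem_toFinset, (mem_arr.1 hp2).2] at ha
        exact hlt a (Finset.mem_sdiff.1 ha).1
    rw [Finset.sum_congr rfl h1]
    by_cases ho : Odd A.card
    · have h0 : A.card ≠ 0 := by intro h; rw [h] at ho; simp at ho
      simp only [ho, if_true, h0, false_and, if_false, add_zero]
      rw [← hW A hAc, ← hBc, ← hN _ (by omega), Finset.sum_product, Finset.sum_mul, Finset.sum_mul]
      simp only [Finset.mul_sum]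
    · simp only [ho, if_false, zero_add]
      by_cases h0 : A.card = 0
      · by_cases hn : n = 0
        · have hA0 : A = ∅ := Finset.card_eq_zero.1 h0
          have hB0 : (s.erase m) \ A = ∅ := Finset.card_eq_zero.1 (by omega)
          rw [hB0, hA0, arr_empty]
          simp [hn]
        · simp [h0, hn]
      · simp [h0]
  refine (Finset.sum_congr rfl key).trans ?_
  refine (sum_powerset_card (s.erase m) (fun k => (if Odd k then W k * x * N (n - k) else 0) +
        if k = 0 ∧ n = 0 then x else 0)).trans ?_
  rw [hc]
  simp only [mul_add, Finset.sum_add_distrib]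
  rw [add_comm]
  congr 1
  rw [Finset.sum_eq_single 0]
  · simp
  · intro b _ hb; simp [hb]
  · simp

theorem sum_wtl_step {α R : Type*} [LinearOrder α] [CommRing R] (x : R) (W N : ℕ → R)
    (s : Finset α) (n : ℕ) (hs : s.card = n + 1) (hodd : Odd n)
    (hW : ∀ u : Finset α, u.card ≤ n → ∑ l ∈ arr u, wt x l = W u.card)
    (hN : ∀ u : Finset α, u.card ≤ n → ∑ l ∈ arr u, wt 1 l = N u.card) :
    ∑ l ∈ arr s, wtl x l = ∑ k ∈ Finset.range (n + 1),
      (n.choose k : R) * if Odd k then W k * (if n - k = 0 then 1 else x) * N (n - k) else 0 := by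
  have hne : s.Nonempty := by rw [← Finset.card_pos]; omega
  set m := s.min' hne with hm
  have hms : m ∈ s := Finset.min'_mem _ _
  have hlt : ∀ a ∈ s.erase m, m < a := fun a ha => Finset.min'_lt_of_mem_erase_min' _ _ ha
  have hc : (s.erase m).card = n := by rw [Finset.card_erase_of_mem hms]; omega
  rw [sum_arr_split hms]
  have key : ∀ A ∈ (s.erase m).powerset, ∑ p ∈ arr A ×ˢ arr ((s.erase m) \ A),
      wtl x (p.1 ++ m :: p.2) = (fun k => (if Odd k then W k * (if n - k = 0 then 1 else x) *
        N (n - k) else 0)) A.card := by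
    intro A hA
    rw [Finset.mem_powerset] at hA
    have hAc : A.card ≤ n := hc ▸ Finset.card_le_card hA
    have hBc : ((s.erase m) \ A).card = n - A.card := by rw [Finset.card_sdiff_of_subset hA, hc]
    have h1 : ∀ p ∈ arr A ×ˢ arr ((s.erase m) \ A), wtl x (p.1 ++ m :: p.2) =
        if Odd A.card then wt x p.1 * (if n - A.card = 0 then 1 else x) * wt 1 p.2 else 0 := by
      rintro ⟨l1, l2⟩ hp
      rw [Finset.mem_product] at hp
      obtain ⟨hp1, hp2⟩ := hp
      dsimp only at hp1 hp2 ⊢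
      rw [wtl_split, length_of_mem_arr hp1, length_of_mem_arr hp2, hBc]
      · intro a ha
        rw [← List.mem_toFinset, (mem_arr.1 hp1).2] at ha
        exact hlt a (hA ha)
      · intro a ha
        rw [← List.mem_toFinset, (mem_arr.1 hp2).2] at ha
        exact hlt a (Finset.mem_sdiff.1 ha).1
      · rw [length_of_mem_arr hp1, length_of_mem_arr hp2, hBc, Nat.add_sub_cancel' hAc]
        exact hodd
    rw [Finset.sum_congr rfl h1]
    by_cases ho : Odd A.card
    · simp only [ho, if_true]
      rw [← hW A hAc, ← hBc, ← hN _ (by omega), Finset.sum_product, Finset.sum_mul, Finset.sum_mul]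
      simp only [Finset.mul_sum]
    · simp only [ho, if_false, Finset.sum_const_zero]
  refine (Finset.sum_congr rfl key).trans ?_
  refine (sum_powerset_card (s.erase m) (fun k => (if Odd k then W k * (if n - k = 0 then 1 else x) *
        N (n - k) else 0))).trans ?_
  rw [hc]

theorem sum_wt_eq {α R : Type*} [LinearOrder α] [CommRing R] (x : R) (W N : ℕ → R)
    (hN : ∀ u : Finset α, ∑ l ∈ arr u, wt 1 l = N u.card ∨ W = N ∧ x = 1)
    (h0 : W 0 = 1)
    (hrec : ∀ n, W (n + 1) = (if n = 0 then x else 0) + ∑ k ∈ Finset.range (n + 1),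
      (n.choose k : R) * if Odd k then W k * x * N (n - k) else 0) (s : Finset α) :
    ∑ l ∈ arr s, wt x l = W s.card := by
  induction hn : s.card using Nat.strong_induction_on generalizing s with
  | _ n ih =>
  cases n with
  | zero =>
    rw [Finset.card_eq_zero] at hn
    subst hn
    simp [arr_empty, wt_nil, h0]
  | succ n =>
    rw [hrec]
    apply sum_wt_step x W N s n hn
    · intro u hu
      exact ih _ (by omega) u rfl
    · intro u hu
      rcases hN u with h | ⟨rfl, rfl⟩
      · exact h
      · exact ih _ (by omega) u rfl


theorem LDU_ofFn {n : ℕ} (σ : Equiv.Perm (Fin n)) : LDU (List.ofFn σ) ↔ DownUp σ := by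
  unfold LDU DownUp
  simp only [List.length_ofFn, List.getElem_ofFn]
  exact ⟨fun h i hi => h i hi, fun h i hi => h ⟨i, by omega⟩ hi⟩

theorem exponent_eq (n : ℕ) (σ : Equiv.Perm (Fin (2*n+2))) (h : DownUp σ) :
    (mmp1 σ + if (σ ⟨0, by omega⟩).val = 2*n+1 then 1 else 0)
      = (lrset (List.ofFn σ).dropLast).card := by
  classical
  have hlr : (lrset (List.ofFn σ).dropLast).card =
      (Finset.univ.filter fun i : Fin (2*n+2) => i.val < 2*n+1 ∧ ∀ j, j < i → σ i < σ j).card := by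
    symm
    apply Finset.card_bij (fun i _ => i.val)
    · intro i hi
      simp only [Finset.mem_filter, Finset.mem_univ, true_and, lrset, Finset.mem_range,
        List.length_dropLast, List.length_ofFn, List.getElem_dropLast, List.getElem_ofFn] at hi ⊢
      refine ⟨by omega, fun j hi' hj => ?_⟩
      exact hi.2 ⟨j, by omega⟩ hj
    · intro i _ j _ hij
      exact Fin.ext hij
    · intro i hi
      simp only [Finset.mem_filter, Finset.mem_univ, true_and, lrset, Finset.mem_range,
        List.length_dropLast, List.length_ofFn, List.getElem_dropLast, List.getElem_ofFn] at hi
      refine ⟨⟨i, by omega⟩, ?_, rfl⟩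
      simp only [Finset.mem_filter, Finset.mem_univ, true_and]
      refine ⟨by omega, fun j hj => ?_⟩
      exact hi.2 j.val (by omega) hj
  have hm : mmp1 σ = (Finset.univ.filter fun i : Fin (2*n+2) => Matches1 σ i).card := by
    unfold mmp1
    rw [← Set.ncard_coe_finset]
    simp
  rw [hlr, hm]
  have hlt : ∀ i j : Fin (2*n+2), i ≠ j → ¬ σ j < σ i → σ i < σ j := fun i j hij hj =>
    lt_of_le_of_ne (not_lt.1 hj) (fun e => hij (σ.injective e))
  -- description of matches away from position zero
  have hpos : ∀ i : Fin (2*n+2), i.val ≠ 0 →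
      (Matches1 σ i ↔ (i.val < 2*n+1 ∧ ∀ j, j < i → σ i < σ j)) := by
    intro i hi
    constructor
    · rintro ⟨⟨j, hj, _⟩, h2⟩
      refine ⟨?_, fun k hk => hlt i k (ne_of_gt hk) fun hh => h2 ⟨k, hk, hh⟩⟩
      have := j.isLt
      have : i.val < j.val := hj
      omega
    · rintro ⟨h1, h2⟩
      refine ⟨?_, fun ⟨k, hk, hh⟩ => absurd hh (not_lt.2 (h2 k hk).le)⟩
      have hodd : ¬ Even i.val := by
        intro he
        have hb := h ⟨i.val - 1, by omega⟩ (by simp only; omega)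
        have hne : ¬ Even (i.val - 1) := by
          intro hh
          have h3 := Nat.even_add_one (n := i.val - 1)
          rw [Nat.sub_add_cancel (by omega)] at h3
          exact h3.1 he hh
        rw [if_neg hne] at hb
        have e : (⟨i.val - 1 + 1, by omega⟩ : Fin (2*n+2)) = i := Fin.ext (by simp only; omega)
        simp only [e] at hb
        exact absurd hb (not_lt.2 (h2 ⟨i.val - 1, by omega⟩ (by
          rw [Fin.lt_def]; simp only; omega)).le)
      have hb := h i (by omega)
      rw [if_neg hodd] at hb
      exact ⟨⟨i.val + 1, by omega⟩, by rw [Fin.lt_def]; simp, hb⟩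
  have hz : ∀ i : Fin (2*n+2), i.val = 0 → i = ⟨0, by omega⟩ := fun i hi => Fin.ext hi
  have hz2 : (0 : ℕ) < 2*n+1 ∧ ∀ j : Fin (2*n+2), j < ⟨0, by omega⟩ → σ ⟨0, by omega⟩ < σ j :=
    ⟨by omega, fun j hj => by rw [Fin.lt_def] at hj; simp at hj⟩
  by_cases hmax : (σ ⟨0, by omega⟩).val = 2*n+1
  · rw [if_pos hmax]
    have hno : ¬ Matches1 σ ⟨0, by omega⟩ := by
      rintro ⟨⟨j, _, hj⟩, _⟩
      rw [Fin.lt_def] at hj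
      have := (σ j).isLt
      omega
    rw [← Finset.card_insert_of_notMem (a := (⟨0, by omega⟩ : Fin (2*n+2))) (by simpa using hno)]
    congr 1
    ext i
    simp only [Finset.mem_insert, Finset.mem_filter, Finset.mem_univ, true_and]
    by_cases hi : i.val = 0
    · have := hz i hi
      subst this
      simp
    · rw [hpos i hi]
      have : i ≠ ⟨0, by omega⟩ := fun e => hi (by rw [e])
      simp only [this, false_or]
  · rw [if_neg hmax, add_zero]
    congr 1
    ext i
    simp only [Finset.mem_filter, Finset.mem_univ, true_and]
    by_cases hi : i.val = 0
    · have := hz i hi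
      subst this
      refine iff_of_true ⟨?_, ?_⟩ hz2
      · obtain ⟨j, hj⟩ := σ.surjective ⟨2*n+1, by omega⟩
        refine ⟨j, ?_, ?_⟩
        · rw [Fin.lt_def]
          by_contra hc
          have : j = ⟨0, by omega⟩ := hz j (by simpa using hc)
          rw [this] at hj
          exact hmax (by rw [hj])
        · rw [hj, Fin.lt_def]
          have := (σ ⟨0, by omega⟩).isLt
          simp only
          omega
      · rintro ⟨j, hj, _⟩
        rw [Fin.lt_def] at hj; simp at hj
    · exact hpos i hi

theorem sum_perm_eq {n : ℕ} {R : Type*} [AddCommMonoid R] (F : List (Fin n) → R) :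
    ∑ σ : Equiv.Perm (Fin n), F (List.ofFn σ) = ∑ l ∈ arr (Finset.univ : Finset (Fin n)), F l := by
  classical
  refine Finset.sum_bij (fun σ _ => List.ofFn σ) ?_ ?_ ?_ ?_
  · intro σ _
    rw [mem_arr]
    refine ⟨List.nodup_ofFn.2 σ.injective, ?_⟩
    ext a
    simp only [List.mem_toFinset, List.mem_ofFn, Finset.mem_univ, iff_true]
    exact σ.surjective a
  · intro σ _ τ _ h
    exact Equiv.coe_fn_injective (List.ofFn_injective h)
  · intro l hl
    have hlen : l.length = n := by rw [length_of_mem_arr hl]; simp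
    rw [mem_arr] at hl
    have hinj : Function.Injective (fun i : Fin n => l.get (i.cast hlen.symm)) :=
      (List.nodup_iff_injective_get.1 hl.1).comp (Fin.cast_injective _)
    refine ⟨Equiv.ofBijective _ (Finite.injective_iff_bijective.1 hinj), Finset.mem_univ _, ?_⟩
    apply List.ext_getElem
    · simp [hlen]
    · intro i h1 h2
      simp
  · intros; rfl

theorem Cbar_eq (n : ℕ) (x : ℝ) :
    ((Cbar n x : ℝ) : ℂ) = ∑ l ∈ arr (Finset.univ : Finset (Fin (2*n+2))), wtl (x : ℂ) l := by
  rw [← sum_perm_eq]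
  unfold Cbar wtl
  push_cast
  refine Finset.sum_congr rfl fun σ _ => ?_
  by_cases h : DownUp σ
  · rw [if_pos h, if_pos ((LDU_ofFn σ).2 h), exponent_eq n σ h]
    push_cast
    rfl
  · rw [if_neg h, if_neg (fun hh => h ((LDU_ofFn σ).1 hh))]
    simp


theorem Cbar_of_rec (x : ℝ) (T S O C : ℕ → ℂ) (T0 : T 0 = 0) (S0 : S 0 = 1) (O0 : O 0 = 0)
    (hT : ∀ n, T (n + 1) = (if n = 0 then 1 else 0) + ∑ k ∈ Finset.range (n + 1),
      (n.choose k : ℂ) * (T k * T (n - k)))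
    (hS : ∀ n, S (n + 1) = ∑ k ∈ Finset.range (n + 1), (n.choose k : ℂ) * (T k * S (n - k)))
    (hO : ∀ n, O (n + 1) = (if n = 0 then (x : ℂ) else 0) + ∑ k ∈ Finset.range (n + 1),
      (n.choose k : ℂ) * (O k * (x * T (n - k))))
    (hC : ∀ n, C (n + 1) = ∑ k ∈ Finset.range (n + 1), (n.choose k : ℂ) *
      (O k * ((if n - k = 0 then (1 - x : ℂ) else 0) + x * S (n - k)))) (n : ℕ) :
    C (2 * n + 1) = 0 ∧ C (2 * n + 2) = ((Cbar n x : ℝ) : ℂ) := by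
  have Te : ∀ n, Even n → T n = 0 := by
    intro n
    induction n using Nat.strong_induction_on with
    | _ n ih =>
    intro he
    cases n with
    | zero => exact T0
    | succ n =>
      have hn : ¬ Even n := Nat.even_add_one.1 he
      have hn0 : n ≠ 0 := by rintro rfl; simp at hn
      rw [hT, if_neg hn0, zero_add]
      apply Finset.sum_eq_zero
      intro k hk
      rw [Finset.mem_range] at hk
      by_cases hk2 : Even k
      · rw [ih k (by omega) hk2]; simp
      · rw [ih (n - k) (by omega) (by rw [Nat.even_sub (by omega)]; tauto)]; simp
  have So : ∀ n, ¬ Even n → S n = 0 := by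
    intro n
    induction n using Nat.strong_induction_on with
    | _ n ih =>
    intro he
    cases n with
    | zero => simp at he
    | succ n =>
      have hn : Even n := by rw [Nat.even_add_one] at he; tauto
      rw [hS]
      apply Finset.sum_eq_zero
      intro k hk
      rw [Finset.mem_range] at hk
      by_cases hk2 : Even k
      · rw [Te k hk2]; simp
      · rw [ih (n - k) (by omega) (by rw [Nat.even_sub (by omega)]; tauto)]; simp
  have Oe : ∀ n, Even n → O n = 0 := by
    intro n
    induction n using Nat.strong_induction_on with
    | _ n ih =>
    intro he
    cases n with
    | zero => exact O0
    | succ n =>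
      have hn : ¬ Even n := Nat.even_add_one.1 he
      have hn0 : n ≠ 0 := by rintro rfl; simp at hn
      rw [hO, if_neg hn0, zero_add]
      apply Finset.sum_eq_zero
      intro k hk
      rw [Finset.mem_range] at hk
      by_cases hk2 : Even k
      · rw [ih k (by omega) hk2]; simp
      · rw [Te (n - k) (by rw [Nat.even_sub (by omega)]; tauto)]; simp
  set E : ℕ → ℂ := fun n => match n with
    | 0 => 1
    | n + 1 => ∑ k ∈ Finset.range (n + 1), (n.choose k : ℂ) * (O k * (x * S (n - k))) with hE
  have Eo : ∀ n, ¬ Even n → E n = 0 := by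
    intro n he
    cases n with
    | zero => simp at he
    | succ n =>
      have hn : Even n := by rw [Nat.even_add_one] at he; tauto
      simp only [hE]
      apply Finset.sum_eq_zero
      intro k hk
      rw [Finset.mem_range] at hk
      by_cases hk2 : Even k
      · rw [Oe k hk2]; simp
      · rw [So (n - k) (by rw [Nat.even_sub (by omega)]; tauto)]; simp
  have hN : ∀ u : Finset (Fin (2*n+2)), ∑ l ∈ arr u, wt (1 : ℂ) l = (T + S) u.card := by
    refine sum_wt_eq 1 (T + S) (T + S) (fun u => Or.inr ⟨rfl, rfl⟩) (by simp [T0, S0]) ?_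
    intro n
    simp only [Pi.add_apply]
    rw [hT, hS, add_assoc, ← Finset.sum_add_distrib]
    congr 1
    refine Finset.sum_congr rfl fun k hk => ?_
    by_cases hk2 : Even k
    · rw [if_neg (by simpa using hk2), Te k hk2]; ring
    · rw [if_pos (by simpa using hk2), So k hk2]; ring
  have hW : ∀ u : Finset (Fin (2*n+2)), ∑ l ∈ arr u, wt (x : ℂ) l = (O + E) u.card := by
    refine sum_wt_eq (x : ℂ) (O + E) (T + S) (fun u => Or.inl (hN u)) (by simp [O0, hE]) ?_
    intro n
    simp only [Pi.add_apply]
    have e : E (n + 1) = ∑ k ∈ Finset.range (n + 1), (n.choose k : ℂ) * (O k * (x * S (n - k))) := rfl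
    rw [hO, e, add_assoc, ← Finset.sum_add_distrib]
    congr 1
    refine Finset.sum_congr rfl fun k hk => ?_
    by_cases hk2 : Even k
    · rw [if_neg (by simpa using hk2), Oe k hk2]; ring
    · rw [if_pos (by simpa using hk2), Eo k hk2]; ring
  constructor
  · rw [hC]
    apply Finset.sum_eq_zero
    intro k hk
    rw [Finset.mem_range] at hk
    by_cases hk2 : Even k
    · rw [Oe k hk2]; simp
    · have h2 : ¬ Even (2 * n - k) := by
        rw [Nat.even_sub (by omega)]; simp [hk2]
      have h3 : 2 * n - k ≠ 0 := by intro h; rw [h] at h2; simp at h2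
      rw [So _ h2, if_neg h3]; simp
  · rw [Cbar_eq, sum_wtl_step (x : ℂ) (O + E) (T + S) Finset.univ (2*n+1) (by simp)
      (odd_two_mul_add_one n) (fun u _ => hW u) (fun u _ => hN u), hC]
    refine Finset.sum_congr rfl fun k hk => ?_
    rw [Finset.mem_range] at hk
    simp only [Pi.add_apply]
    by_cases hk2 : Even k
    · rw [if_neg (show ¬ Odd k by simpa using hk2), Oe k hk2]; ring
    · have h2 : Even (2 * n + 1 - k) := by
        rw [Nat.even_sub (by omega)]; simp [hk2]
      rw [if_pos (show Odd k by simpa using hk2), Eo k hk2, Te _ h2]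
      by_cases h0 : 2 * n + 1 - k = 0
      · rw [if_pos h0, if_pos h0, h0, S0]; ring
      · rw [if_neg h0, if_neg h0]; ring


theorem cos_mem_slit {z : ℂ} (hz : z ∈ Metric.ball (0 : ℂ) (Real.pi / 2)) :
    Complex.cos z ∈ Complex.slitPlane := by
  left
  have h1 : |z.re| < Real.pi / 2 := by
    refine lt_of_le_of_lt (Complex.abs_re_le_norm z) ?_
    simpa using hz
  rw [abs_lt] at h1
  have h2 : (Complex.cos z).re = Real.cos z.re * Real.cosh z.im := by
    rw [Complex.cos_eq, ← Complex.ofReal_cos, ← Complex.ofReal_cosh, ← Complex.ofReal_sin,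
      ← Complex.ofReal_sinh]
    simp
    left; rfl
  rw [h2]
  exact mul_pos (Real.cos_pos_of_mem_Ioo ⟨by linarith, h1.2⟩) (Real.cosh_pos _)

theorem iter_rec (f g h : ℂ → ℂ) (c : ℂ) (hg : AnalyticAt ℂ g 0) (hh : AnalyticAt ℂ h 0)
    (hf : ∀ z ∈ Metric.ball (0 : ℂ) (Real.pi / 2), HasDerivAt f (c + g z * h z) z) (n : ℕ) :
    iteratedDeriv (n + 1) f 0 = (if n = 0 then c else 0) + ∑ k ∈ Finset.range (n + 1),
      (n.choose k : ℂ) * (iteratedDeriv k g 0 * iteratedDeriv (n - k) h 0) := by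
  rw [iteratedDeriv_succ']
  have hev : deriv f =ᶠ[nhds 0] ((fun _ => c) + g * h) := by
    filter_upwards [Metric.ball_mem_nhds (0 : ℂ) (by positivity : 0 < Real.pi / 2)] with z hz
    rw [(hf z hz).deriv]; rfl
  have hgh : ContDiffAt ℂ n (g * h) 0 := hg.contDiffAt.mul hh.contDiffAt
  rw [hev.iteratedDeriv_eq, iteratedDeriv_add contDiffAt_const hgh,
    iteratedDeriv_mul hg.contDiffAt hh.contDiffAt, iteratedDeriv_const]
  congr 1
  refine Finset.sum_congr rfl fun k hk => ?_
  ring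

theorem real_primitive (f P : ℂ → ℂ) (g : ℝ → ℝ)
    (hf : DifferentiableOn ℂ f (Metric.ball (0 : ℂ) (Real.pi / 2)))
    (hP : ∀ z ∈ Metric.ball (0 : ℂ) (Real.pi / 2), HasDerivAt P (f z) z)
    (hg : ∀ y : ℝ, |y| < Real.pi / 2 → f y = (g y : ℂ)) (t : ℝ) (ht : |t| < Real.pi / 2) :
    P t = P 0 + ((∫ y in (0:ℝ)..t, g y : ℝ) : ℂ) := by
  have hmem : ∀ y ∈ Set.uIcc 0 t, |y| < Real.pi / 2 := by
    intro y hy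
    refine lt_of_le_of_lt ?_ ht
    have := Set.abs_sub_left_of_mem_uIcc hy
    simpa using this
  have hb : ∀ y : ℝ, |y| < Real.pi / 2 → (y : ℂ) ∈ Metric.ball (0 : ℂ) (Real.pi / 2) := by
    intro y hy; simpa using hy
  have h1 : ∫ y in (0:ℝ)..t, f y = P t - P (0 : ℝ) := by
    refine intervalIntegral.integral_eq_sub_of_hasDerivAt (f := fun y : ℝ => P y) ?_ ?_
    · intro y hy
      exact (hP y (hb y (hmem y hy))).comp_ofReal
    · apply ContinuousOn.intervalIntegrable
      exact hf.continuousOn.comp Complex.continuous_ofReal.continuousOn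
        (fun y hy => hb y (hmem y hy))
  have h2 : ∫ y in (0:ℝ)..t, f y = ∫ y in (0:ℝ)..t, (g y : ℂ) :=
    intervalIntegral.integral_congr fun y hy => hg y (hmem y hy)
  rw [h2, intervalIntegral.integral_ofReal] at h1
  rw [h1]; simp


/-- `1 + Σ_{n≥1} C̄^{(1,0,∅,0)}_{2n}(x) t^{2n}/(2n)!` converges to
`1 + ∫_0^t x (sec z)^x (1 − x + x sec z) (∫_0^z (cos y)^x dy) dz`. -/
theorem stmt6 (x t : ℝ) (ht : |t| < Real.pi / 2) :
    HasSum (fun n : ℕ => if n = 0 then (1 : ℝ)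
        else Cbar (n-1) x * t ^ (2*n) / (Nat.factorial (2*n) : ℝ))
      (1 + ∫ z in (0:ℝ)..t, x * ((Real.cos z)⁻¹) ^ x * (1 - x + x * (Real.cos z)⁻¹) *
        ∫ y in (0:ℝ)..z, (Real.cos y) ^ x) := by
  set B := Metric.ball (0 : ℂ) (Real.pi / 2) with hB
  have hBo : IsOpen B := Metric.isOpen_ball
  have h0B : (0 : ℂ) ∈ B := Metric.mem_ball_self (by positivity)
  have hcos0 : ∀ z ∈ B, Complex.cos z ≠ 0 := fun z hz => Complex.slitPlane_ne_zero (cos_mem_slit hz)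
  have hTd : ∀ z ∈ B, HasDerivAt Complex.tan (1 + Complex.tan z * Complex.tan z) z := by
    intro z hz
    have h := Complex.hasDerivAt_tan (hcos0 z hz)
    refine h.congr_deriv ?_
    have hc := hcos0 z hz
    rw [Complex.tan_eq_sin_div_cos]
    field_simp
    linear_combination (-1 : ℂ) * Complex.sin_sq_add_cos_sq z
  set S : ℂ → ℂ := fun z => (Complex.cos z)⁻¹ with hS
  have hSd : ∀ z ∈ B, HasDerivAt S (0 + Complex.tan z * S z) z := by
    intro z hz
    have h := (Complex.hasDerivAt_cos z).inv (hcos0 z hz)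
    refine h.congr_deriv ?_
    have hc := hcos0 z hz
    simp only [hS]
    rw [Complex.tan_eq_sin_div_cos]
    field_simp
    ring
  have hpow : ∀ c : ℂ, ∀ z ∈ B, HasDerivAt (fun z => Complex.cos z ^ c)
      (c * Complex.cos z ^ (c - 1) * (-Complex.sin z)) z := by
    intro c z hz
    exact (Complex.hasDerivAt_cos z).cpow_const (cos_mem_slit hz)
  have hpowD : ∀ c : ℂ, DifferentiableOn ℂ (fun z => Complex.cos z ^ c) B :=
    fun c z hz => (hpow c z hz).differentiableAt.differentiableWithinAt
  obtain ⟨P, P0, hP⟩ := ((hpowD x).isExactOn_ball).with_val_at 0 0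
  set O : ℂ → ℂ := fun z => x * Complex.cos z ^ (-x : ℂ) * P z with hO
  have hOd : ∀ z ∈ B, HasDerivAt O (x + O z * (x * Complex.tan z)) z := by
    intro z hz
    have h := ((hpow (-x) z hz).const_mul (x : ℂ)).mul (hP z hz)
    refine h.congr_deriv ?_
    have hc := hcos0 z hz
    simp only [hO]
    have e1 : Complex.cos z ^ (-x - 1 : ℂ) = Complex.cos z ^ (-x : ℂ) / Complex.cos z := by
      rw [Complex.cpow_sub _ _ hc, Complex.cpow_one]
    have e2 : Complex.cos z ^ (-x : ℂ) * Complex.cos z ^ (x : ℂ) = 1 := by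
      rw [← Complex.cpow_add _ _ hc]; simp
    rw [e1, Complex.tan_eq_sin_div_cos]
    linear_combination (x : ℂ) * e2
  have hdiff : ∀ {f f' : ℂ → ℂ}, (∀ z ∈ B, HasDerivAt f (f' z) z) → DifferentiableOn ℂ f B :=
    fun h z hz => (h z hz).differentiableAt.differentiableWithinAt
  have hTD := hdiff hTd
  have hSD := hdiff hSd
  have hOD := hdiff hOd
  have hHD : DifferentiableOn ℂ (fun z => (1 - x : ℂ) + x * S z) B :=
    (differentiableOn_const _).add (hSD.const_mul _)
  have hQD : DifferentiableOn ℂ (fun z => O z * ((1 - x : ℂ) + x * S z)) B := hOD.mul hHD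
  obtain ⟨C, C0, hC⟩ := hQD.isExactOn_ball.with_val_at 0 1
  have hCD := hdiff hC
  have hnB : B ∈ nhds (0 : ℂ) := hBo.mem_nhds h0B
  have aT := hTD.analyticAt hnB
  have aS := hSD.analyticAt hnB
  have aO := hOD.analyticAt hnB
  have aH := hHD.analyticAt hnB
  have axT : AnalyticAt ℂ (fun z => (x : ℂ) * Complex.tan z) 0 := analyticAt_const.mul aT
  have rT := iter_rec _ _ _ 1 aT aT hTd
  have rS := iter_rec _ _ _ 0 aT aS hSd
  have rO := iter_rec _ _ _ (x : ℂ) aO axT hOd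
  have rC := iter_rec C O _ 0 aO aH (fun z hz => by rw [zero_add]; exact hC z hz)
  have hcoef := Cbar_of_rec x (fun n => iteratedDeriv n Complex.tan 0)
    (fun n => iteratedDeriv n S 0) (fun n => iteratedDeriv n O 0) (fun n => iteratedDeriv n C 0)
    (by simp) (by simp [hS]) (by simp [hO, P0]) rT (fun n => by simpa using rS n)
    (fun n => by
      have := rO n
      simpa only [iteratedDeriv_const_mul_field] using this)
    (fun n => by
      have := rC n
      rw [ite_self, zero_add] at this
      refine this.trans (Finset.sum_congr rfl fun k _ => ?_)
      congr 2
      have e : (fun z => (1 - x : ℂ) + x * S z) = (fun _ => (1 - x : ℂ)) + fun z => (x : ℂ) * S z := rfl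
      have hcd : ContDiffAt ℂ (n - k : ℕ) (fun z => (x : ℂ) * S z) 0 :=
        (analyticAt_const.mul aS : AnalyticAt ℂ (fun z => (x : ℂ) * S z) 0).contDiffAt
      rw [e, iteratedDeriv_add contDiffAt_const hcd,
        iteratedDeriv_const, iteratedDeriv_const_mul_field])
  have htB : (t : ℂ) ∈ B := by simpa [hB] using ht
  have hsum := Complex.hasSum_taylorSeries_on_ball hCD htB
  have hcosr : ∀ y : ℝ, |y| < Real.pi / 2 → 0 < Real.cos y := fun y hy =>
    Real.cos_pos_of_mem_Ioo ⟨by linarith [(abs_lt.1 hy).1], (abs_lt.1 hy).2⟩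
  have hPr : ∀ y : ℝ, |y| < Real.pi / 2 → P y = ((∫ u in (0:ℝ)..y, (Real.cos u) ^ x : ℝ) : ℂ) := by
    intro y hy
    rw [real_primitive _ P (fun u => (Real.cos u) ^ x) (hpowD x) hP _ y hy, P0, zero_add]
    intro u hu
    rw [Complex.ofReal_cpow (hcosr u hu).le, Complex.ofReal_cos]
  have hCr := real_primitive _ C (fun z => x * ((Real.cos z)⁻¹) ^ x * (1 - x + x * (Real.cos z)⁻¹) *
        ∫ y in (0:ℝ)..z, (Real.cos y) ^ x) hQD hC (by
    intro y hy
    simp only [hO, hS]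
    rw [hPr y hy]
    have hc := hcosr y hy
    have e : Complex.cos y ^ (-x : ℂ) = (((Real.cos y)⁻¹ ^ x : ℝ) : ℂ) := by
      rw [Real.inv_rpow hc.le, ← Real.rpow_neg hc.le, Complex.ofReal_cpow hc.le, Complex.ofReal_cos]
      simp
    rw [e]
    push_cast
    ring) t ht
  rw [hCr, C0] at hsum
  rw [← Complex.hasSum_ofReal]
  have hinj : Function.Injective (fun n : ℕ => 2 * n) := fun a b h => by simpa using h
  rw [← hinj.hasSum_iff (by
    intro k hk
    have hk' : ¬ Even k := fun ⟨r, hr⟩ => hk ⟨r, by simp only; omega⟩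
    obtain ⟨r, rfl⟩ := Nat.not_even_iff_odd.1 hk'
    rw [(hcoef r).1]; simp)] at hsum
  convert! hsum using 1
  · funext n
    simp only [Function.comp]
    cases n with
    | zero => simp [C0]
    | succ n =>
      have := (hcoef n).2
      have e : 2 * (n + 1) = 2 * n + 2 := by ring
      rw [e, this, if_neg (by omega)]
      simp only [Nat.add_sub_cancel, sub_zero, smul_eq_mul]
      push_cast
      field_simp
  · push_cast
    rfl
end
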